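/- Let (E^{p,q}, d_v, d_h) be a double complex of finite-dimensional vector spaces with finitely many nonzero terms, where d_v : E^{p,q} → E^{p,q+1}, d_h : E^{p,q} → E^{p−1,q}, d_v² = 0, d_h² = 0, and d_h d_v + d_v d_h = 0. Suppose each E^{p,q} decomposes as ⊕_{λ ∈ P} E^{p,q,λ} for a poset P, with d_v(E^{p,q,λ}) ⊆ E^{p,q+1,λ} and d_h(E^{p,q,λ}) ⊆ ⊕_{λ' < λ} E^{p−1,q,λ'}. If the total complex Tot(E) (with differential d_h + d_v, graded by p − q) is exact, then the E₁ graph of E has a perfect matching; here the E₁ graph has dim H(d_v)^{p,q,λ} vertices labeled (p,q,λ) and all edges (p,q,λ) → (p−r, q−r+1, λ') for r > 0 and λ' < λ. -/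

import Mathlib

open DirectSum

section

variable (K : Type) [Field K] (P : Type) [PartialOrder P] [DecidableEq P]
variable (F : ℤ → ℤ → P → Type)
variable [∀ p q l, AddCommGroup (F p q l)] [∀ p q l, Module K (F p q l)]

/-- The term `E^{p,q} = ⊕_{λ ∈ P} E^{p,q,λ}` of the double complex. -/
noncomputable abbrev EE (p q : ℤ) : Type := ⨁ l : P, F p q l

variable (dv : ∀ (p q : ℤ) (l : P), F p q l →ₗ[K] F p (q + 1) l)

/-- The vertical differential `E^{p,q} → E^{p,q+1}` induced by the label-preserving
componentwise maps `dv`. -/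
noncomputable def DV (p q : ℤ) : EE P F p q →ₗ[K] EE P F p (q + 1) :=
  DirectSum.toModule K P _ fun l =>
    (DirectSum.lof K P (fun l' => F p (q + 1) l') l).comp (dv p q l)

/-- Transport along an equality of the `q`-index. -/
noncomputable def qcast (p : ℤ) {q q' : ℤ} (h : q = q') :
    EE P F p q →ₗ[K] EE P F p q' := by subst h; exact LinearMap.id

/-- The `i`-th term `Tot^i = ⊕_{p−q=i} E^{p,q}` of the total complex. -/
noncomputable abbrev Tot (i : ℤ) : Type := ⨁ p : ℤ, EE P F p (p - i)

variable (dh : ∀ p q : ℤ, EE P F p q →ₗ[K] EE P F (p - 1) q)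

/-- The total differential `d_h + d_v : Tot^{i+1} → Tot^i`. -/
noncomputable def totD (i : ℤ) : Tot P F (i + 1) →ₗ[K] Tot P F i :=
  DirectSum.toModule K ℤ (Tot P F i) fun p =>
    (DirectSum.lof K ℤ (fun p' => EE P F p' (p' - i)) (p - 1)).comp
        ((qcast K P F (p - 1) (show p - (i + 1) = p - 1 - i by ring)).comp
          (dh p (p - (i + 1)))) +
      (DirectSum.lof K ℤ (fun p' => EE P F p' (p' - i)) p).comp
        ((qcast K P F p (show p - (i + 1) + 1 = p - i by ring)).comp
          (DV K P F dv p (p - (i + 1))))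

/-- The dimension of the vertical homology `H(d_v)^{p,q,λ} = ker/im`; since
`im ⊆ ker`, it equals `dim ker (d_v^{p,q,λ}) − dim im (d_v^{p,q−1,λ})`. -/
noncomputable def Hdim (p q : ℤ) (l : P) : ℕ :=
  Module.finrank K (LinearMap.ker (dv p q l)) -
    Module.finrank K (LinearMap.range (dv p (q - 1) l))

end

section helpers

theorem aux_matrix_match {K S T : Type*} [Field K] [Finite S] [Finite T]
    (A : S → T → K) (hc : Nat.card S = Nat.card T)
    (hinj : ∀ c : S → K, (∀ t, ∑ᶠ s, c s * A s t = 0) → c = 0) :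
    ∃ σ : S ≃ T, ∀ s, A s (σ s) ≠ 0 := by
  classical
  have := Fintype.ofFinite S
  obtain ⟨e⟩ : Nonempty (S ≃ T) := by
    have := Fintype.ofFinite T
    exact ⟨Fintype.equivOfCardEq (by simpa [Nat.card_eq_fintype_card] using hc)⟩
  let M : Matrix S S K := fun s s' => A s (e s')
  have hdet : M.det ≠ 0 := by
    intro h0
    obtain ⟨v, hv, hv0⟩ := Matrix.exists_vecMul_eq_zero_iff.mpr h0
    apply hv
    apply hinj
    intro t
    rw [finsum_eq_sum_of_fintype]
    have := congrFun hv0 (e.symm t)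
    simpa [Matrix.vecMul, dotProduct, M] using this
  rw [← Matrix.det_transpose, Matrix.det_apply] at hdet
  obtain ⟨σ, -, hσ⟩ := Finset.exists_ne_zero_of_sum_ne_zero hdet
  refine ⟨σ.trans e, fun s hs => hσ ?_⟩
  rw [Finset.prod_eq_zero (Finset.mem_univ s)]
  · simp
  · simpa [M, Matrix.transpose] using hs

theorem aux_exact_match {K N : Type} [Field K] [Finite N]
    (D : (N → K) →ₗ[K] (N → K)) (hD : LinearMap.range D = LinearMap.ker D) [DecidableEq N] :
    ∃ m : N → N, Function.Involutive m ∧ ∀ n, m n ≠ n ∧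
      (D (Pi.single n 1) (m n) ≠ 0 ∨ D (Pi.single (m n) 1) n ≠ 0) := by
  classical
  have := Fintype.ofFinite N
  let R := LinearMap.range D
  let v : N → ((N → K) ⧸ R) := fun n => R.mkQ (Pi.single n 1)
  obtain ⟨κ, a, ha, hspan, hli⟩ := exists_linearIndependent' K v
  have hspan' : Submodule.span K (Set.range v) = ⊤ := by
    have : Set.range v = R.mkQ '' (Set.range (Pi.basisFun K N)) := by
      rw [← Set.range_comp]; congr 1; ext n; simp [v]
    rw [this, ← Submodule.map_span, (Pi.basisFun K N).span_eq, Submodule.map_top,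
      Submodule.range_mkQ]
  rw [hspan'] at hspan
  have hκ : Finite κ := Finite.of_injective a ha
  have := Fintype.ofFinite κ
  let T := {n : N // n ∉ Set.range a}
  have hcκ : Module.finrank K ((N → K) ⧸ R) = Fintype.card κ :=
    Module.finrank_eq_card_basis (Module.Basis.mk hli hspan.ge)
  have h1 := Submodule.finrank_quotient_add_finrank R
  have h2 := LinearMap.finrank_range_add_finrank_ker D
  rw [← hD] at h2
  have h3 : Nat.card κ + Nat.card T = Nat.card N := by
    rw [← Nat.card_range_of_injective ha]
    rw [← Nat.card_sum]
    exact Nat.card_congr (Equiv.Set.sumCompl (Set.range a))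
  have hc : Nat.card κ = Nat.card T := by
    simp only [Nat.card_eq_fintype_card] at *
    simp only [Module.finrank_fintype_fun_eq_card] at h1 h2
    change _ + Module.finrank K R = _ at h1
    change Module.finrank K R + Module.finrank K R = _ at h2
    omega
  -- independence modulo R
  have hind : ∀ c : κ → K, (∑ s, c s • (Pi.single (a s) 1 : N → K)) ∈ R → c = 0 := by
    intro c hcR
    rw [Fintype.linearIndependent_iff] at hli
    ext s
    apply hli c _ s
    have := (Submodule.Quotient.mk_eq_zero R).mpr hcR
    rw [← Submodule.mkQ_apply, map_sum] at this
    simpa [v] using this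
  obtain ⟨σ, hσ⟩ := aux_matrix_match (K := K) (S := κ) (T := T)
    (fun s t => D (Pi.single (a s) 1) t.1) hc (by
      intro c h
      let x : N → K := ∑ s, c s • (Pi.single (a s) 1 : N → K)
      have hx : ∀ t : N, t ∉ Set.range a → D x t = 0 := by
        intro t ht
        have := h ⟨t, ht⟩
        rw [finsum_eq_sum_of_fintype] at this
        simpa [x] using this
      have hx2 : D x = ∑ s, (D x (a s)) • (Pi.single (a s) 1 : N → K) := by
        ext t
        by_cases ht : t ∈ Set.range a
        · obtain ⟨s, rfl⟩ := ht
          simp [Pi.single_apply, ha.eq_iff]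
        · rw [hx t ht]
          simp only [Finset.sum_apply, Pi.smul_apply]
          symm
          apply Finset.sum_eq_zero
          intro s _
          rw [Pi.single_eq_of_ne, smul_zero]
          rintro rfl
          exact ht ⟨s, rfl⟩
      have h0 := hind (fun s => D x (a s)) (by rw [← hx2]; exact ⟨x, rfl⟩)
      have hDx : D x = 0 := by
        rw [hx2]; apply Finset.sum_eq_zero; intro s _
        have := congrFun h0 s
        simp only [Pi.zero_apply] at this
        rw [this, zero_smul]
      apply hind c
      change x ∈ LinearMap.range D
      rw [hD]; exact hDx)
  let e : κ ⊕ T ≃ N := (Equiv.sumCongr (Equiv.ofInjective a ha) (Equiv.refl _)).trans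
    (Equiv.Set.sumCompl (Set.range a))
  have hel : ∀ s, e (Sum.inl s) = a s := fun s => rfl
  have her : ∀ t, e (Sum.inr t) = t.1 := fun t => rfl
  let τ : κ ⊕ T → κ ⊕ T := Sum.elim (fun s => Sum.inr (σ s)) (fun t => Sum.inl (σ.symm t))
  refine ⟨fun n => e (τ (e.symm n)), ?_, ?_⟩
  · intro n
    obtain ⟨y, rfl⟩ := e.surjective n
    rcases y with s | t <;> simp [τ]
  · intro n
    obtain ⟨y, rfl⟩ := e.surjective n
    refine ⟨?_, ?_⟩
    · rcases y with s | t <;> simp only [Equiv.symm_apply_apply, ne_eq, e.injective.eq_iff] <;> simp [τ]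
    · rcases y with s | t
      · left
        beta_reduce
        rw [Equiv.symm_apply_apply]
        exact hσ s
      · right
        beta_reduce
        rw [Equiv.symm_apply_apply]
        have := hσ (σ.symm t)
        rwa [Equiv.apply_symm_apply] at this

theorem aux_schur {K V J N : Type} [Field K] [AddCommGroup V] [Module K V] [Finite J] [Finite N]
    (D : V →ₗ[K] V) (hD : LinearMap.range D = LinearMap.ker D)
    (b : Module.Basis (J ⊕ J ⊕ N) K V)
    (hb : ∀ j, b (Sum.inr (Sum.inl j)) = D (b (Sum.inl j))) :
    ∃ m : N → N, Function.Involutive m ∧ ∀ n, m n ≠ n ∧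
      (b.repr (D (b (Sum.inr (Sum.inr n)))) (Sum.inr (Sum.inr (m n))) ≠ 0 ∨
        b.repr (D (b (Sum.inr (Sum.inr (m n))))) (Sum.inr (Sum.inr n)) ≠ 0) := by
  classical
  have := Fintype.ofFinite N
  have := Fintype.ofFinite J
  have hDD : ∀ x, D (D x) = 0 := fun x => by
    have : D x ∈ LinearMap.range D := ⟨x, rfl⟩
    rw [hD] at this; exact this
  let c : V →ₗ[K] (N → K) := LinearMap.pi fun n => b.coord (Sum.inr (Sum.inr n))
  let s : (N → K) →ₗ[K] V := Fintype.linearCombination K (fun n => b (Sum.inr (Sum.inr n)))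
  let s1 : (J → K) →ₗ[K] V := Fintype.linearCombination K (fun n => b (Sum.inl n))
  have hcs : ∀ y, c (s y) = y := by
    intro y; ext n
    simp [c, s, Fintype.linearCombination_apply, Finsupp.single_apply]
  have hcu : ∀ y, c (s1 y) = 0 := by
    intro y; ext n
    simp [c, s1, Fintype.linearCombination_apply]
  have hcDu : ∀ y, c (D (s1 y)) = 0 := by
    intro y; ext n
    simp [c, s1, Fintype.linearCombination_apply, ← hb]
  have hdec : ∀ z, ∃ y1 y2, z = s1 y1 + D (s1 y2) + s (c z) := by
    intro z
    refine ⟨fun j => b.repr z (Sum.inl j), fun j => b.repr z (Sum.inr (Sum.inl j)), ?_⟩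
    refine (b.sum_repr z).symm.trans ?_
    rw [Fintype.sum_sum_type, Fintype.sum_sum_type]
    simp [s1, s, c, Fintype.linearCombination_apply, hb, add_assoc]
  have hDinj : ∀ y, D (s1 y) = 0 → y = 0 := by
    intro y hy
    ext j
    have : b.repr (D (s1 y)) (Sum.inr (Sum.inl j)) = y j := by
      simp [s1, Fintype.linearCombination_apply, ← hb, Finsupp.single_apply]
    rw [← this, hy]; simp
  let E : (N → K) →ₗ[K] (N → K) := c ∘ₗ D ∘ₗ s
  have hcD : ∀ z, c (D z) = E (c z) := by
    intro z
    obtain ⟨y1, y2, h⟩ := hdec z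
    conv_lhs => rw [h]
    simp [hDD, hcDu, E]
  have hE : LinearMap.range E = LinearMap.ker E := by
    apply le_antisymm
    · rintro _ ⟨y, rfl⟩
      change E (c (D (s y))) = 0
      rw [← hcD, hDD, map_zero]
    · intro y hy
      change c (D (s y)) = 0 at hy
      obtain ⟨y1, y2, h⟩ := hdec (D (s y))
      rw [hy, map_zero, add_zero] at h
      have h1 : D (s1 y1) = 0 := by
        have := congrArg D h
        simpa [hDD] using this.symm
      have h1 := hDinj _ h1
      subst h1
      have h2 : s y - s1 y2 ∈ LinearMap.ker D := by
        simp [h]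
      rw [← hD] at h2
      obtain ⟨z, hz⟩ := h2
      refine ⟨c z, ?_⟩
      rw [← hcD, hz, map_sub, hcs, hcu, sub_zero]
  have hEs : ∀ n n', E (Pi.single n 1) n' = b.repr (D (b (Sum.inr (Sum.inr n)))) (Sum.inr (Sum.inr n')) := by
    intro n n'
    simp [E, c, s]
  obtain ⟨m, hm, hm'⟩ := aux_exact_match E hE
  exact ⟨m, hm, by simpa only [hEs] using hm'⟩
end helpers

section assembly

variable (K : Type) [Field K] (P : Type) [PartialOrder P] [DecidableEq P]
variable (F : ℤ → ℤ → P → Type)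
variable [∀ p q l, AddCommGroup (F p q l)] [∀ p q l, Module K (F p q l)]

/-- The whole complex, as a direct sum over all positions. -/
noncomputable abbrev VV : Type := ⨁ x : ℤ × ℤ × P, F x.1 x.2.1 x.2.2

/-- Inclusion of one position. -/
noncomputable def vl (p q : ℤ) (l : P) : F p q l →ₗ[K] VV P F :=
  DirectSum.lof K (ℤ × ℤ × P) (fun x => F x.1 x.2.1 x.2.2) (p, q, l)

/-- Inclusion of one term. -/
noncomputable def jmap (p q : ℤ) : EE P F p q →ₗ[K] VV P F :=
  DirectSum.toModule K P _ fun l => vl K P F p q l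

theorem jmap_lof (p q : ℤ) (l : P) (x : F p q l) :
    jmap K P F p q (DirectSum.lof K P (fun l' => F p q l') l x) = vl K P F p q l x := by
  simp [jmap]

theorem jmap_qcast (p : ℤ) {q q' : ℤ} (h : q = q') (e : EE P F p q) :
    jmap K P F p q' (qcast K P F p h e) = jmap K P F p q e := by
  subst h; rfl

variable (dv : ∀ (p q : ℤ) (l : P), F p q l →ₗ[K] F p (q + 1) l)
variable (dh : ∀ p q : ℤ, EE P F p q →ₗ[K] EE P F (p - 1) q)

/-- The total differential on the whole complex. -/
noncomputable def DD : VV P F →ₗ[K] VV P F :=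
  DirectSum.toModule K (ℤ × ℤ × P) _ fun x =>
    (vl K P F x.1 (x.2.1 + 1) x.2.2).comp (dv x.1 x.2.1 x.2.2) +
      (jmap K P F (x.1 - 1) x.2.1).comp ((dh x.1 x.2.1).comp
        (DirectSum.lof K P (fun l' => F x.1 x.2.1 l') x.2.2))

theorem DD_vl (p q : ℤ) (l : P) (x : F p q l) :
    DD K P F dv dh (vl K P F p q l x) = vl K P F p (q + 1) l (dv p q l x) +
      jmap K P F (p - 1) q (dh p q (DirectSum.lof K P (fun l' => F p q l') l x)) := by
  unfold DD
  rw [vl, DirectSum.toModule_lof]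
  rfl

theorem DD_jmap (p q : ℤ) (e : EE P F p q) :
    DD K P F dv dh (jmap K P F p q e) = jmap K P F p (q + 1) (DV K P F dv p q e) +
      jmap K P F (p - 1) q (dh p q e) := by
  have : (DD K P F dv dh).comp (jmap K P F p q) =
      (jmap K P F p (q + 1)).comp (DV K P F dv p q) + (jmap K P F (p - 1) q).comp (dh p q) := by
    apply DirectSum.linearMap_ext
    intro l
    ext x
    simp only [LinearMap.comp_apply, LinearMap.add_apply, jmap_lof, DD_vl, DV,
      DirectSum.toModule_lof]
  exact LinearMap.congr_fun this e

/-- Inclusion of one degree. -/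
noncomputable def Phi (i : ℤ) : Tot P F i →ₗ[K] VV P F :=
  DirectSum.toModule K ℤ _ fun p => jmap K P F p (p - i)

theorem DD_Phi (i : ℤ) (t : Tot P F (i + 1)) :
    DD K P F dv dh (Phi K P F (i + 1) t) = Phi K P F i (totD K P F dv dh i t) := by
  have : (DD K P F dv dh).comp (Phi K P F (i + 1)) =
      (Phi K P F i).comp (totD K P F dv dh i) := by
    apply DirectSum.linearMap_ext
    intro p
    apply LinearMap.ext
    intro e
    simp only [LinearMap.comp_apply, LinearMap.add_apply, Phi, DirectSum.toModule_lof, totD,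
      map_add, DD_jmap, jmap_qcast]
    rw [add_comm]
  exact LinearMap.congr_fun this t

/-- Projection to one degree. -/
noncomputable def Psi (i : ℤ) : VV P F →ₗ[K] Tot P F i :=
  DirectSum.toModule K (ℤ × ℤ × P) _ fun x =>
    if h : x.2.1 = x.1 - i then
      (DirectSum.lof K ℤ (fun p' => EE P F p' (p' - i)) x.1).comp
        ((qcast K P F x.1 h).comp (DirectSum.lof K P (fun l' => F x.1 x.2.1 l') x.2.2))
    else 0

theorem Psi_Phi (i : ℤ) (t : Tot P F i) : Psi K P F i (Phi K P F i t) = t := by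
  have : (Psi K P F i).comp (Phi K P F i) = LinearMap.id := by
    apply DirectSum.linearMap_ext
    intro p
    apply DirectSum.linearMap_ext
    intro l
    apply LinearMap.ext
    intro e
    simp only [LinearMap.comp_apply, Phi, DirectSum.toModule_lof, jmap_lof, LinearMap.id_apply]
    rw [vl, Psi, DirectSum.toModule_lof, dif_pos rfl]
    rfl
  exact LinearMap.congr_fun this t

theorem Phi_Psi_vl (i p q : ℤ) (l : P) (x : F p q l) :
    Phi K P F i (Psi K P F i (vl K P F p q l x)) = if q = p - i then vl K P F p q l x else 0 := by
  rw [Psi, vl, DirectSum.toModule_lof]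
  split_ifs with h
  · simp only [LinearMap.comp_apply, Phi, DirectSum.toModule_lof, jmap_qcast, jmap_lof]
    rfl
  · simp

theorem Phi_Psi_jmap (i p q : ℤ) (e : EE P F p q) :
    Phi K P F i (Psi K P F i (jmap K P F p q e)) =
      if q = p - i then jmap K P F p q e else 0 := by
  have : ((Phi K P F i).comp (Psi K P F i)).comp (jmap K P F p q) =
      if q = p - i then jmap K P F p q else 0 := by
    apply DirectSum.linearMap_ext
    intro l
    ext1 x
    simp only [LinearMap.comp_apply, jmap_lof, Phi_Psi_vl]
    split_ifs <;> simp [jmap_lof]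
  have := LinearMap.congr_fun this e
  simp only [LinearMap.comp_apply] at this
  rw [this]
  split_ifs <;> rfl

theorem VV_induction {C : VV P F → Prop} (v : VV P F) (h0 : C 0)
    (h1 : ∀ p q l x, C (vl K P F p q l x)) (h2 : ∀ x y, C x → C y → C (x + y)) : C v := by
  induction v using DirectSum.induction_on with
  | zero => exact h0
  | of x z => exact h1 x.1 x.2.1 x.2.2 z
  | add x y hx hy => exact h2 x y hx hy

theorem Phi_Psi_DD (i : ℤ) (v : VV P F) :
    Phi K P F i (Psi K P F i (DD K P F dv dh v)) =
      DD K P F dv dh (Phi K P F (i + 1) (Psi K P F (i + 1) v)) := by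
  induction v using VV_induction K P F with
  | h0 => simp
  | h1 p q l x =>
    rw [DD_vl, map_add, map_add, Phi_Psi_vl, Phi_Psi_jmap, Phi_Psi_vl]
    by_cases h : q = p - (i + 1)
    · rw [if_pos (by omega), if_pos (by omega), if_pos h, DD_vl]
    · rw [if_neg (by omega), if_neg (by omega), if_neg h, map_zero, add_zero]
  | h2 x y hx hy => simp only [map_add, hx, hy]

theorem sum_Phi_Psi (v : VV P F) : ∃ S : Finset ℤ, ∀ T : Finset ℤ, S ⊆ T →
    ∑ i ∈ T, Phi K P F i (Psi K P F i v) = v := by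
  induction v using VV_induction K P F with
  | h0 => exact ⟨∅, by simp⟩
  | h1 p q l x =>
    refine ⟨{p - q}, fun T hT => ?_⟩
    rw [Finset.sum_eq_single_of_mem (p - q) (hT (by simp))]
    · rw [Phi_Psi_vl, if_pos (by omega)]
    · intro b _ hb
      rw [Phi_Psi_vl, if_neg (by omega)]
  | h2 x y hx hy =>
    obtain ⟨S, hS⟩ := hx
    obtain ⟨S', hS'⟩ := hy
    refine ⟨S ∪ S', fun T hT => ?_⟩
    simp only [map_add, Finset.sum_add_distrib]
    rw [hS T (Finset.union_subset_left hT), hS' T (Finset.union_subset_right hT)]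

theorem DD_exact (hexact : ∀ i : ℤ, LinearMap.range (totD K P F dv dh (i + 1)) =
      LinearMap.ker (totD K P F dv dh i)) :
    LinearMap.range (DD K P F dv dh) = LinearMap.ker (DD K P F dv dh) := by
  apply le_antisymm
  · rintro _ ⟨v, rfl⟩
    rw [LinearMap.mem_ker]
    induction v using VV_induction K P F with
    | h0 => simp
    | h1 p q l x =>
      have h : vl K P F p q l x = Phi K P F (p - q - 2 + 1 + 1)
          (Psi K P F (p - q - 2 + 1 + 1) (vl K P F p q l x)) := by
        rw [Phi_Psi_vl, if_pos (by omega)]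
      rw [h, DD_Phi, DD_Phi]
      have : ∀ t, totD K P F dv dh (p - q - 2) (totD K P F dv dh (p - q - 2 + 1) t) = 0 := by
        intro t
        have : totD K P F dv dh (p - q - 2 + 1) t ∈ LinearMap.ker (totD K P F dv dh (p - q - 2)) := by
          rw [← hexact]; exact ⟨t, rfl⟩
        exact this
      rw [this, map_zero]
    | h2 x y hx hy => simp only [map_add, hx, hy, add_zero]
  · intro v hv
    rw [LinearMap.mem_ker] at hv
    obtain ⟨S, hS⟩ := sum_Phi_Psi K P F v
    rw [← hS S subset_rfl]
    apply Submodule.sum_mem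
    intro i _
    obtain ⟨i, rfl⟩ : ∃ i', i = i' + 1 := ⟨i - 1, by ring⟩
    have h1 := Phi_Psi_DD K P F dv dh i v
    rw [hv, map_zero, map_zero, DD_Phi] at h1
    have h2 := congrArg (Psi K P F i) h1
    rw [Psi_Phi, map_zero] at h2
    have h3 : Psi K P F (i + 1) v ∈ LinearMap.range (totD K P F dv dh (i + 1)) := by
      rw [hexact]; exact h2.symm
    obtain ⟨y, hy⟩ := h3
    rw [← hy, ← DD_Phi]
    exact ⟨_, rfl⟩

end assembly

section final

theorem aux_u {K A B : Type} [Field K] [AddCommGroup A] [Module K A] [AddCommGroup B] [Module K B]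
    [FiniteDimensional K B] (f : A →ₗ[K] B) :
    ∃ u : Fin (Module.finrank K (LinearMap.range f)) → A,
      ∀ z, ∃ a ∈ Submodule.span K (Set.range u), f (z - a) = 0 := by
  obtain ⟨g, hg⟩ := f.rangeRestrict.exists_rightInverse_of_surjective f.range_rangeRestrict
  let w := Module.finBasis K (LinearMap.range f)
  refine ⟨fun i => g (w i), fun z => ⟨g (f.rangeRestrict z), ?_, ?_⟩⟩
  · have h1 : (Set.range fun i => g (w i)) = g '' Set.range w := by
      rw [← Set.range_comp]; rfl
    rw [h1, ← Submodule.map_span, w.span_eq]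
    exact ⟨_, trivial, rfl⟩
  · have := congrArg Subtype.val (LinearMap.congr_fun hg (f.rangeRestrict z))
    simp only [LinearMap.comp_apply, LinearMap.id_apply] at this
    rw [map_sub, sub_eq_zero]
    exact this.symm

theorem aux_h {K B : Type} [Field K] [AddCommGroup B] [Module K B]
    [FiniteDimensional K B] (R Z : Submodule K B) (hRZ : R ≤ Z) (n : ℕ)
    (hn : n = Module.finrank K Z - Module.finrank K R) :
    ∃ h : Fin n → B, (∀ i, h i ∈ Z) ∧
      ∀ z ∈ Z, ∃ b ∈ Submodule.span K (Set.range h), z - b ∈ R := by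
  obtain ⟨C, hC⟩ := Submodule.exists_isCompl R
  have hsup : R ⊔ (C ⊓ Z) = Z := by
    rw [← sup_inf_assoc_of_le C hRZ, hC.sup_eq_top, top_inf_eq]
  have hinf : R ⊓ (C ⊓ Z) = ⊥ := by
    rw [← inf_assoc, hC.inf_eq_bot, bot_inf_eq]
  have hf := Submodule.finrank_sup_add_finrank_inf_eq R (C ⊓ Z)
  rw [hsup, hinf, finrank_bot] at hf
  have hn' : Module.finrank K ↥(C ⊓ Z) = n := by omega
  let w := Module.finBasisOfFinrankEq K _ hn'
  refine ⟨fun i => (w i : B), fun i => (w i).2.2, fun z hz => ?_⟩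
  rw [← hsup] at hz
  obtain ⟨r, hr, b, hb, rfl⟩ := Submodule.mem_sup.mp hz
  refine ⟨b, ?_, by simpa using hr⟩
  have h1 : (Set.range fun i => (w i : B)) = (C ⊓ Z).subtype '' Set.range w := by
    rw [← Set.range_comp]; rfl
  rw [h1, ← Submodule.map_span, w.span_eq]
  exact ⟨⟨b, hb⟩, trivial, rfl⟩

variable (K : Type) [Field K] (P : Type) [PartialOrder P] [DecidableEq P]
variable (F : ℤ → ℤ → P → Type)
variable [∀ p q l, AddCommGroup (F p q l)] [∀ p q l, Module K (F p q l)]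
variable (dv : ∀ (p q : ℤ) (l : P), F p q l →ₗ[K] F p (q + 1) l)
variable (dh : ∀ p q : ℤ, EE P F p q →ₗ[K] EE P F (p - 1) q)

/-- Rank of the vertical differential. -/
noncomputable def kdim (x : ℤ × ℤ × P) : ℕ :=
  Module.finrank K (LinearMap.range (dv x.1 x.2.1 x.2.2))

theorem Hdim_succ (p q : ℤ) (l : P) : Hdim K P F dv p (q + 1) l =
    Module.finrank K (LinearMap.ker (dv p (q + 1) l)) -
    Module.finrank K (LinearMap.range (dv p q l)) := by
  unfold Hdim
  have : q + 1 - 1 = q := by ring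
  rw [this]

theorem jmap_mem (p q : ℤ) (e : EE P F p q) (M : Submodule K (VV P F))
    (h : ∀ l, vl K P F p q l (e l) ∈ M) : jmap K P F p q e ∈ M := by
  classical
  rw [← DirectSum.sum_support_of e, map_sum]
  apply Submodule.sum_mem
  intro l _
  have := jmap_lof K P F p q l (e l)
  rw [DirectSum.lof_eq_of] at this
  rw [this]
  exact h l

variable [∀ p q l, FiniteDimensional K (F p q l)]

theorem dim_split (hdv2 : ∀ p q l, (dv p (q + 1) l).comp (dv p q l) = 0) (p q : ℤ) (l : P) :
    Module.finrank K (F p q l) = kdim K P F dv (p, q, l) +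
      (kdim K P F dv (p, q - 1, l) + Hdim K P F dv p q l) := by
  obtain ⟨q, rfl⟩ : ∃ q', q = q' + 1 := ⟨q - 1, by ring⟩
  have h1 := LinearMap.finrank_range_add_finrank_ker (dv p (q + 1) l)
  have h2 : Module.finrank K (LinearMap.range (dv p q l)) ≤
      Module.finrank K (LinearMap.ker (dv p (q + 1) l)) := by
    apply Submodule.finrank_mono
    rw [LinearMap.range_le_ker_iff]
    exact hdv2 p q l
  rw [Hdim_succ]
  have : q + 1 - 1 = q := by ring
  rw [this]
  simp only [kdim]
  omega

/-- Shift of the vertical index. -/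
def shiftE : (ℤ × ℤ × P) ≃ (ℤ × ℤ × P) where
  toFun x := (x.1, x.2.1 - 1, x.2.2)
  invFun x := (x.1, x.2.1 + 1, x.2.2)
  left_inv x := by simp
  right_inv x := by simp

theorem index_equiv (hdv2 : ∀ p q l, (dv p (q + 1) l).comp (dv p q l) = 0) :
    Nonempty ((Σ x : ℤ × ℤ × P, Fin (Module.finrank K (F x.1 x.2.1 x.2.2))) ≃
      (Σ x : ℤ × ℤ × P, Fin (kdim K P F dv x)) ⊕ (Σ x : ℤ × ℤ × P, Fin (kdim K P F dv x)) ⊕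
      (Σ x : ℤ × ℤ × P, Fin (Hdim K P F dv x.1 x.2.1 x.2.2))) := by
  have e1 : ∀ x : ℤ × ℤ × P, Fin (Module.finrank K (F x.1 x.2.1 x.2.2)) ≃
      Fin (kdim K P F dv x) ⊕ Fin (kdim K P F dv (shiftE P x)) ⊕
        Fin (Hdim K P F dv x.1 x.2.1 x.2.2) := fun x =>
    (finCongr (dim_split K P F dv hdv2 x.1 x.2.1 x.2.2)).trans
      (finSumFinEquiv.symm.trans (Equiv.sumCongr (Equiv.refl _) finSumFinEquiv.symm))
  refine ⟨(Equiv.sigmaCongrRight e1).trans ((Equiv.sigmaSumDistrib _ _).trans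
    (Equiv.sumCongr (Equiv.refl _) ((Equiv.sigmaSumDistrib _ _).trans
      (Equiv.sumCongr ?_ (Equiv.refl _)))))⟩
  exact Equiv.sigmaCongrLeft (β := fun x => Fin (kdim K P F dv x)) (shiftE P)

theorem exists_bases (hdv2 : ∀ p q l, (dv p (q + 1) l).comp (dv p q l) = 0) :
    ∃ (u : ∀ p q l, Fin (kdim K P F dv (p, q, l)) → F p q l)
      (h : ∀ p q l, Fin (Hdim K P F dv p q l) → F p q l),
      (∀ p q l i, dv p q l (h p q l i) = 0) ∧
      ∀ p q l z, ∃ a ∈ Submodule.span K (Set.range (u p q l)),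
        ∃ b ∈ Submodule.span K (Set.range (h p q l)),
        ∃ w ∈ Submodule.span K (Set.range (u p (q - 1) l)),
          vl K P F p q l z = vl K P F p q l a + vl K P F p q l b +
            vl K P F p (q - 1 + 1) l (dv p (q - 1) l w) := by
  choose u hu using fun p q l => aux_u (dv p q l)
  have hh : ∀ p q l, ∃ h : Fin (Hdim K P F dv p q l) → F p q l,
      (∀ i, dv p q l (h i) = 0) ∧ ∀ z, dv p q l z = 0 →
        ∃ b ∈ Submodule.span K (Set.range h), ∃ y : F p (q - 1) l,
          vl K P F p q l (z - b) = vl K P F p (q - 1 + 1) l (dv p (q - 1) l y) := by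
    intro p q l
    obtain ⟨q, rfl⟩ : ∃ q', q = q' + 1 := ⟨q - 1, by ring⟩
    obtain ⟨h, h1, h2⟩ := aux_h (LinearMap.range (dv p q l)) (LinearMap.ker (dv p (q + 1) l))
      (by rw [LinearMap.range_le_ker_iff]; exact hdv2 p q l) _ (Hdim_succ K P F dv p q l)
    refine ⟨h, h1, fun z hz => ?_⟩
    obtain ⟨b, hb, y, hy⟩ := h2 z hz
    refine ⟨b, hb, ?_⟩
    have : q + 1 - 1 = q := by ring
    rw [this]
    exact ⟨y, by rw [hy]⟩
  choose h h1 h2 using hh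
  refine ⟨u, h, h1, fun p q l z => ?_⟩
  obtain ⟨a, ha, ha'⟩ := hu p q l z
  obtain ⟨b, hb, y, hy⟩ := h2 p q l _ ha'
  obtain ⟨w, hw, hw'⟩ := hu p (q - 1) l y
  refine ⟨a, ha, b, hb, w, hw, ?_⟩
  rw [map_sub, sub_eq_zero] at hw'
  rw [← hw', ← hy, map_sub, map_sub]
  abel

end final

/-- Let `(E^{p,q}, d_v, d_h)` be a double complex of
finite-dimensional vector spaces with finitely many nonzero terms, with each term
decomposed as `⊕_{λ ∈ P} E^{p,q,λ}` over a poset `P`, the vertical differential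
label-preserving and the horizontal differential strictly label-decreasing.  If the
total complex is exact, then the `E₁` graph — with `dim H(d_v)^{p,q,λ}` vertices
labeled `(p,q,λ)` and all edges `(p,q,λ) → (p−r, q−r+1, λ')` for `r > 0`, `λ' < λ` —
has a perfect matching. -/
theorem exact_double_complex_E1_graph_has_perfect_matching
    (K : Type) [Field K] (P : Type) [PartialOrder P] [DecidableEq P]
    (F : ℤ → ℤ → P → Type)
    [∀ p q l, AddCommGroup (F p q l)] [∀ p q l, Module K (F p q l)]
    [∀ p q l, FiniteDimensional K (F p q l)]
    (hfin : (Function.support fun x : ℤ × ℤ × P =>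
      Module.finrank K (F x.1 x.2.1 x.2.2)).Finite)
    (dv : ∀ (p q : ℤ) (l : P), F p q l →ₗ[K] F p (q + 1) l)
    (dh : ∀ p q : ℤ, EE P F p q →ₗ[K] EE P F (p - 1) q)
    (hdv2 : ∀ p q l, (dv p (q + 1) l).comp (dv p q l) = 0)
    (hdh2 : ∀ p q, (dh (p - 1) q).comp (dh p q) = 0)
    (hanti : ∀ p q, (dh p (q + 1)).comp (DV K P F dv p q) +
      (DV K P F dv (p - 1) q).comp (dh p q) = 0)
    (hfilt : ∀ (p q : ℤ) (l : P) (x : F p q l) (l' : P), ¬ l' < l →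
      (dh p q (DirectSum.of (fun l'' => F p q l'') l x)) l' = 0)
    (hexact : ∀ i : ℤ, LinearMap.range (totD K P F dv dh (i + 1)) =
      LinearMap.ker (totD K P F dv dh i)) :
    ∃ m : (Σ x : ℤ × ℤ × P, Fin (Hdim K P F dv x.1 x.2.1 x.2.2)) →
        (Σ x : ℤ × ℤ × P, Fin (Hdim K P F dv x.1 x.2.1 x.2.2)),
      Function.Involutive m ∧ ∀ v, m v ≠ v ∧
        (((m v).1.2.2 < v.1.2.2 ∧ ∃ r : ℤ, 0 < r ∧
            (m v).1.1 = v.1.1 - r ∧ (m v).1.2.1 = v.1.2.1 - r + 1) ∨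
          (v.1.2.2 < (m v).1.2.2 ∧ ∃ r : ℤ, 0 < r ∧
            v.1.1 = (m v).1.1 - r ∧ v.1.2.1 = (m v).1.2.1 - r + 1)) := by
  classical
  have hex := DD_exact K P F dv dh hexact
  obtain ⟨u, h, hh0, hdec⟩ := exists_bases K P F dv hdv2
  obtain ⟨ι⟩ := index_equiv K P F dv hdv2
  let J := Σ x : ℤ × ℤ × P, Fin (kdim K P F dv x)
  let N := Σ x : ℤ × ℤ × P, Fin (Hdim K P F dv x.1 x.2.1 x.2.2)
  let D := DD K P F dv dh
  let uv : J → VV P F := fun j => vl K P F j.1.1 j.1.2.1 j.1.2.2 (u _ _ _ j.2)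
  let hv : N → VV P F := fun n => vl K P F n.1.1 n.1.2.1 n.1.2.2 (h _ _ _ n.2)
  -- finiteness
  have hfinI : Finite (Σ x : ℤ × ℤ × P, Fin (Module.finrank K (F x.1 x.2.1 x.2.2))) := by
    have := hfin.to_subtype
    let g : (Σ x : ℤ × ℤ × P, Fin (Module.finrank K (F x.1 x.2.1 x.2.2))) →
        (Σ x : (Function.support fun x : ℤ × ℤ × P => Module.finrank K (F x.1 x.2.1 x.2.2)),
          Fin (Module.finrank K (F x.1.1 x.1.2.1 x.1.2.2))) := fun y =>
      ⟨⟨y.1, fun h0 => by have := y.2.isLt; simp only at h0; omega⟩, y.2⟩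
    apply Finite.of_injective g
    rintro ⟨x, i⟩ ⟨y, j⟩ hxy
    simp only [g, Sigma.mk.injEq] at hxy
    obtain ⟨hx, hxy⟩ := hxy
    have hx : x = y := congrArg Subtype.val hx
    subst hx
    rw [eq_of_heq hxy]
  have hfinS : Finite (J ⊕ J ⊕ N) := Finite.of_equiv _ ι
  have hfinJ : Finite J := Finite.of_injective (Sum.inl : J → J ⊕ J ⊕ N) Sum.inl_injective
  have hfinN : Finite N := Finite.of_injective (fun n => Sum.inr (Sum.inr n) : N → J ⊕ J ⊕ N)
    (Sum.inr_injective.comp Sum.inr_injective)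
  have hfr : Module.finrank K (VV P F) = Nat.card (J ⊕ J ⊕ N) := by
    rw [← Nat.card_congr ι]
    exact Module.finrank_eq_nat_card_basis
      (DFinsupp.basis fun x : ℤ × ℤ × P => Module.finBasis K (F x.1 x.2.1 x.2.2))
  -- lower bound on p
  obtain ⟨p0, hp0⟩ : ∃ p0 : ℤ, ∀ p q l, p < p0 → ∀ z : F p q l, z = 0 := by
    obtain ⟨p0, hp0⟩ := (hfin.image Prod.fst).bddBelow
    refine ⟨p0, fun p q l hp z => ?_⟩
    have h0 : Module.finrank K (F p q l) = 0 := by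
      by_contra hne
      have := hp0 (Set.mem_image_of_mem Prod.fst (show (p, q, l) ∈ _ from hne))
      simp only at this
      omega
    have := Module.finrank_zero_iff.mp h0
    exact Subsingleton.elim _ _
  let C : Submodule K (VV P F) := Submodule.span K (Set.range uv ∪ Set.range (fun j => D (uv j)))
  let W : ℤ → ℤ → P → Submodule K (VV P F) := fun p q l => Submodule.span K
    (hv '' {n | n.1.2.2 ≤ l ∧ ∃ r : ℤ, 0 ≤ r ∧ n.1.1 = p - r ∧ n.1.2.1 = q - r})
  have hWmono : ∀ p q l l', l' ≤ l → W (p - 1) (q - 1) l' ≤ W p q l := by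
    intro p q l l' hl
    apply Submodule.span_mono
    apply Set.image_mono
    rintro n ⟨h1, r, h2, h3, h4⟩
    exact ⟨h1.trans hl, r + 1, by omega, by omega, by omega⟩
  have huC : ∀ p q l a, a ∈ Submodule.span K (Set.range (u p q l)) →
      vl K P F p q l a ∈ C ∧ D (vl K P F p q l a) ∈ C := by
    intro p q l a ha
    induction ha using Submodule.span_induction with
    | mem x hx =>
      obtain ⟨i, rfl⟩ := hx
      exact ⟨Submodule.subset_span (Or.inl ⟨⟨(p, q, l), i⟩, rfl⟩),
        Submodule.subset_span (Or.inr ⟨⟨(p, q, l), i⟩, rfl⟩)⟩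
    | zero => simp
    | add x y _ _ hx hy =>
      simp only [map_add]
      exact ⟨add_mem hx.1 hy.1, add_mem hx.2 hy.2⟩
    | smul c x _ hx =>
      simp only [map_smul]
      exact ⟨Submodule.smul_mem _ _ hx.1, Submodule.smul_mem _ _ hx.2⟩
  have hhW : ∀ p q l b, b ∈ Submodule.span K (Set.range (h p q l)) →
      vl K P F p q l b ∈ W p q l := by
    intro p q l a ha
    induction ha using Submodule.span_induction with
    | mem x hx =>
      obtain ⟨i, rfl⟩ := hx
      exact Submodule.subset_span ⟨⟨(p, q, l), i⟩, ⟨le_rfl, 0, by simp⟩, rfl⟩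
    | zero => simp
    | add x y _ _ hx hy =>
      simp only [map_add]
      exact add_mem hx hy
    | smul c x _ hx =>
      simp only [map_smul]
      exact Submodule.smul_mem _ _ hx
  have key : ∀ k : ℕ, ∀ p q l, p < p0 + k → ∀ z : F p q l, vl K P F p q l z ∈ C ⊔ W p q l := by
    intro k
    induction k with
    | zero =>
      intro p q l hp z
      rw [hp0 p q l (by simpa using hp) z, map_zero]
      exact zero_mem _
    | succ k ih =>
      intro p q l hp z
      obtain ⟨a, ha, b, hb, w, hw, hz⟩ := hdec p q l z
      have h1 := DD_vl K P F dv dh p (q - 1) l w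
      rw [hz, show vl K P F p (q - 1 + 1) l (dv p (q - 1) l w) = _ from
        (sub_eq_of_eq_add h1).symm]
      refine add_mem (add_mem (Submodule.mem_sup_left (huC _ _ _ _ ha).1)
        (Submodule.mem_sup_right (hhW _ _ _ _ hb)))
        (sub_mem (Submodule.mem_sup_left (huC _ _ _ _ hw).2) ?_)
      apply jmap_mem
      intro l'
      by_cases hl : l' < l
      · exact sup_le_sup_left (hWmono p q l l' hl.le) C
          (ih (p - 1) (q - 1) l' (by push_cast at hp; omega) _)
      · rw [DirectSum.lof_eq_of, hfilt _ _ _ _ _ hl, map_zero]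
        exact zero_mem _
  have key' : ∀ p q l (z : F p q l), vl K P F p q l z ∈ C ⊔ W p q l := fun p q l z =>
    key (p - p0 + 1).toNat p q l (by omega) z
  -- the basis
  let bf : J ⊕ J ⊕ N → VV P F := Sum.elim uv (Sum.elim (fun j => D (uv j)) hv)
  have hCle : C ≤ Submodule.span K (Set.range bf) := by
    apply Submodule.span_mono
    rintro _ (⟨j, rfl⟩ | ⟨j, rfl⟩)
    · exact ⟨Sum.inl j, rfl⟩
    · exact ⟨Sum.inr (Sum.inl j), rfl⟩
  have hWle : ∀ p q l, W p q l ≤ Submodule.span K (Set.range bf) := by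
    intro p q l
    apply Submodule.span_mono
    rintro _ ⟨n, -, rfl⟩
    exact ⟨Sum.inr (Sum.inr n), rfl⟩
  have hspan : ⊤ ≤ Submodule.span K (Set.range bf) := by
    intro v _
    induction v using VV_induction K P F with
    | h0 => exact zero_mem _
    | h1 p q l x => exact sup_le hCle (hWle p q l) (key' p q l x)
    | h2 x y hx hy => exact add_mem (hx trivial) (hy trivial)
  have := Fintype.ofFinite (J ⊕ J ⊕ N)
  let b : Module.Basis (J ⊕ J ⊕ N) K (VV P F) := basisOfTopLeSpanOfCardEqFinrank bf hspan
    (by rw [hfr, Nat.card_eq_fintype_card])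
  have hb : ∀ i, b i = bf i := fun i => by
    simp only [b, coe_basisOfTopLeSpanOfCardEqFinrank]
  obtain ⟨m, hm, hm'⟩ := aux_schur D hex b (fun j => by rw [hb, hb]; rfl)
  have hcoordC : ∀ v ∈ C, ∀ n : N, b.repr v (Sum.inr (Sum.inr n)) = 0 := by
    intro v hv' n
    change v ∈ LinearMap.ker (b.coord (Sum.inr (Sum.inr n)))
    refine (Submodule.span_le.mpr ?_ : C ≤ _) hv'
    rintro _ (⟨j, rfl⟩ | ⟨j, rfl⟩)
    · have : uv j = b (Sum.inl j) := (hb (Sum.inl j)).symm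
      simp [this]
    · have : D (uv j) = b (Sum.inr (Sum.inl j)) := (hb (Sum.inr (Sum.inl j))).symm
      simp [this]
  have hcoordW : ∀ p q l, ∀ v ∈ W p q l, ∀ n : N, ¬ (n.1.2.2 ≤ l ∧
      ∃ r : ℤ, 0 ≤ r ∧ n.1.1 = p - r ∧ n.1.2.1 = q - r) →
      b.repr v (Sum.inr (Sum.inr n)) = 0 := by
    intro p q l v hv' n hn
    change v ∈ LinearMap.ker (b.coord (Sum.inr (Sum.inr n)))
    refine (Submodule.span_le.mpr ?_ : W p q l ≤ _) hv'
    rintro _ ⟨n', hn', rfl⟩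
    have h1 : hv n' = b (Sum.inr (Sum.inr n')) := (hb (Sum.inr (Sum.inr n'))).symm
    have h2 : n' ≠ n := by rintro rfl; exact hn hn'
    simp [h1, h2]
  have hedge : ∀ n n' : N, b.repr (D (b (Sum.inr (Sum.inr n)))) (Sum.inr (Sum.inr n')) ≠ 0 →
      n'.1.2.2 < n.1.2.2 ∧ ∃ r : ℤ, 0 < r ∧
        n'.1.1 = n.1.1 - r ∧ n'.1.2.1 = n.1.2.1 - r + 1 := by
    intro n n' hne
    by_contra hcon
    apply hne
    rw [hb]
    change D (vl K P F n.1.1 n.1.2.1 n.1.2.2 (h _ _ _ n.2)) ∈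
      LinearMap.ker (b.coord (Sum.inr (Sum.inr n')))
    rw [DD_vl, hh0, map_zero, zero_add]
    apply jmap_mem
    intro l'
    by_cases hl : l' < n.1.2.2
    · obtain ⟨c, hc, w, hw, hcw⟩ := Submodule.mem_sup.mp (key' (n.1.1 - 1) n.1.2.1 l'
        (dh n.1.1 n.1.2.1 (DirectSum.lof K P (fun l' => F n.1.1 n.1.2.1 l') n.1.2.2
          (h _ _ _ n.2)) l'))
      rw [← hcw]
      refine add_mem (hcoordC c hc n') (hcoordW _ _ _ w hw n' ?_)
      rintro ⟨h1, r, h2, h3, h4⟩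
      exact hcon ⟨h1.trans_lt hl, r + 1, by omega, by omega, by omega⟩
    · rw [DirectSum.lof_eq_of, hfilt _ _ _ _ _ hl, map_zero]
      exact zero_mem _
  refine ⟨m, hm, fun v => ⟨(hm' v).1, ?_⟩⟩
  rcases (hm' v).2 with h1 | h1
  · exact Or.inl (hedge _ _ h1)
  · exact Or.inr (hedge _ _ h1)
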